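/- Let λ ⊢ n. The Specht polynomials SP_t, where t ranges over all standard Young tableaux of shape λ, form a basis of the Specht module SP_λ: they are linearly independent over ℂ and their ℂ-linear span equals the span of the Specht polynomials SP_T over all bijective fillings T of λ. -/

import Mathlib

open scoped Classical

noncomputable section

open MvPolynomial

/-- The Specht polynomial of a bijective filling `T` of the cells of `lam` by `0,…,n-1`:
the product over all pairs of cells in the same column (the first strictly above the
second) of the differences of the corresponding variables — i.e. the product of the
column Vandermonde determinants. -/
noncomputable def spechtPoly (n : ℕ) (lam : YoungDiagram) (T : lam.cells ≃ Fin n) :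
    MvPolynomial (Fin n) ℂ :=
  ∏ p ∈ Finset.univ.filter
      (fun p : lam.cells × lam.cells =>
        (p.1 : ℕ × ℕ).2 = (p.2 : ℕ × ℕ).2 ∧ (p.1 : ℕ × ℕ).1 < (p.2 : ℕ × ℕ).1),
    (X (T p.1) - X (T p.2))

/-- The Specht module: the linear span of all Specht polynomials of shape `lam`. -/
noncomputable def spechtModule (n : ℕ) (lam : YoungDiagram) :
    Submodule ℂ (MvPolynomial (Fin n) ℂ) :=
  Submodule.span ℂ (Set.range (spechtPoly n lam))

/-- A bijective filling of the cells of `mu` by `0,…,n-1` is standard if it is strictly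
increasing along each row and strictly increasing down each column. -/
def IsStandardFilling {n : ℕ} {mu : YoungDiagram} (T : mu.cells ≃ Fin n) : Prop :=
  (∀ c d : mu.cells, (c : ℕ × ℕ).1 = (d : ℕ × ℕ).1 → (c : ℕ × ℕ).2 < (d : ℕ × ℕ).2 →
      (T c : ℕ) < (T d : ℕ)) ∧
  (∀ c d : mu.cells, (c : ℕ × ℕ).2 = (d : ℕ × ℕ).2 → (c : ℕ × ℕ).1 < (d : ℕ × ℕ).1 →
      (T c : ℕ) < (T d : ℕ))

/-!
In the lexicographic order the leading monomial of a standard Specht polynomial is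
`∏ xᵢ ^ (row of i)`. The rows of the entries determine a standard tableau, since each row lists
its entries in increasing order; so the leading monomials are distinct, which gives independence.

For the span, let `S` be a set of cells with more than `m` elements, each in a column of length at
most `m`. Antisymmetrising the product of column Vandermondes over the permutations of `S` gives
zero, because every exponent is less than `m` and so every monomial repeats an exponent on `S`.
Applied at a descent in a row, this Garnir relation expresses a Specht polynomial through others
whose larger entries lie further to the right, so straightening terminates.
-/

/-! ### Leading monomials -/

theorem linearIndependent_of_injective_degree {σ ι R : Type*} [CommRing R] (m : MonomialOrder σ)
    {f : ι → MvPolynomial σ R} (hreg : ∀ i, m.leadingCoeff (f i) ∈ nonZeroDivisors R)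
    (hinj : Function.Injective fun i => m.degree (f i)) : LinearIndependent R f := by
  rw [linearIndependent_iff']
  intro s g hsum
  by_contra! hg
  obtain ⟨i, hi, hmax⟩ := Finset.exists_max_image {i ∈ s | g i ≠ 0}
    (fun i => m.toSyn (m.degree (f i))) (hg.imp fun i hi => Finset.mem_filter.mpr hi)
  obtain ⟨his, hgi⟩ := Finset.mem_filter.mp hi
  have hcoeff : ∀ j ∈ s, j ≠ i → coeff (m.degree (f i)) (g j • f j) = 0 := by
    intro j hjs hji
    rcases eq_or_ne (g j) 0 with hgj | hgj
    · simp [hgj]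
    have hlt : m.toSyn (m.degree (f j)) < m.toSyn (m.degree (f i)) :=
      (hmax j (Finset.mem_filter.mpr ⟨hjs, hgj⟩)).lt_of_ne
        fun h => hji (hinj (m.toSyn.injective h))
    rw [coeff_smul, m.coeff_eq_zero_of_lt hlt, smul_zero]
  have hlead : g i * m.leadingCoeff (f i) = 0 := by
    have := congrArg (coeff (m.degree (f i))) hsum
    rwa [coeff_sum, Finset.sum_eq_single_of_mem i his hcoeff, coeff_smul, coeff_zero] at this
  exact hgi ((mul_right_mem_nonZeroDivisors_eq_zero_iff (hreg i)).mp hlead)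

section LexDifference

variable {ι R : Type*} [LinearOrder ι] [WellFoundedGT ι] [CommRing R] [Nontrivial R] {i j : ι}

theorem lex_degree_X_lt_degree_X (h : j < i) :
    MonomialOrder.lex.toSyn (MonomialOrder.lex.degree (X i : MvPolynomial ι R)) <
      MonomialOrder.lex.toSyn (MonomialOrder.lex.degree (X j : MvPolynomial ι R)) := by
  rw [MonomialOrder.degree_X, MonomialOrder.degree_X, MonomialOrder.lex_lt_iff]
  exact Finsupp.Lex.single_lt_iff.mpr h

theorem lex_degree_X_sub_X (h : j < i) :
    MonomialOrder.lex.degree (X i - X j : MvPolynomial ι R) = Finsupp.single j 1 := by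
  rw [← neg_sub, MonomialOrder.degree_neg,
    MonomialOrder.degree_sub_of_lt (lex_degree_X_lt_degree_X h), MonomialOrder.degree_X]

theorem lex_leadingCoeff_X_sub_X (h : j < i) :
    MonomialOrder.lex.leadingCoeff (X i - X j : MvPolynomial ι R) = -1 := by
  rw [← neg_sub, MonomialOrder.leadingCoeff_neg,
    MonomialOrder.leadingCoeff_sub_of_lt (lex_degree_X_lt_degree_X h),
    MonomialOrder.leadingCoeff_X]

end LexDifference

/-! ### Signed sums over permutations -/

theorem prod_key_lt_comp_perm {α β S : Type*} [Fintype α] [DecidableEq α] [LinearOrder β]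
    [CommRing S] {key : α → β} (hkey : Function.Injective key) (σ : Equiv.Perm α) {F : α → α → S}
    (hF : ∀ a b, F a b = -F b a) :
    ∏ p : α × α with key p.1 < key p.2, F (σ p.1) (σ p.2) =
      Equiv.Perm.sign σ • ∏ p : α × α with key p.1 < key p.2, F p.1 p.2 := by
  obtain ⟨e, key_lt_iff⟩ :
      ∃ e : Fin (Fintype.card α) ≃ α, ∀ i j, key (e i) < key (e j) ↔ i < j := by
    let : LinearOrder α := LinearOrder.lift' key hkey
    exact ⟨(Fintype.orderIsoFinOfCardEq α rfl).toEquiv,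
      fun i j => (Fintype.orderIsoFinOfCardEq α rfl).lt_iff_lt⟩
  have transport (F : α → α → S) : ∏ p : α × α with key p.1 < key p.2, F p.1 p.2 =
      ∏ j, ∏ i ∈ Finset.Iio j, F (e i) (e j) := by
    simp only [Finset.prod_filter, Fintype.prod_prod_type_right, ← e.prod_comp, key_lt_iff,
      ← Finset.filter_gt_eq_Iio]
  rw [transport fun a b => F (σ a) (σ b), transport F, Units.smul_def, zsmul_eq_mul,
    ← Equiv.Perm.sign_permCongr e.symm σ]
  simpa [Equiv.permCongr_apply] using (e.symm.permCongr σ).prod_Iio_comp_eq_sign_mul_prod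
    (f := fun i j => F (e i) (e j)) fun i j => hF _ _

theorem rename_swap_monomial {α R : Type*} [DecidableEq α] [CommSemiring R] {c d : α}
    {m : α →₀ ℕ} (h : m c = m d) (r : R) :
    rename (Equiv.swap c d) (monomial m r) = monomial m r := by
  have mapDomain_swap : m.mapDomain (Equiv.swap c d) = m := by
    ext x
    rw [Finsupp.mapDomain_equiv_apply, Equiv.symm_swap, Equiv.swap_apply_def]
    split_ifs <;> simp_all
  rw [rename_monomial, mapDomain_swap]

section Antisymmetrization

variable {α R : Type*} [Fintype α] [DecidableEq α] [CommRing R]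

theorem sum_sign_smul_rename_eq_zero_of_rename_swap {G : Subgroup (Equiv.Perm α)} [Fintype G]
    {c d : α} (hcd : c ≠ d) (hG : Equiv.swap c d ∈ G) {p : MvPolynomial α R}
    (hp : rename (Equiv.swap c d) p = p) :
    ∑ σ : G, Equiv.Perm.sign σ.1 • rename σ.1 p = 0 := by
  refine Finset.sum_involution (fun σ _ => σ * ⟨Equiv.swap c d, hG⟩) (fun σ _ => ?_)
    (fun σ _ _ h => ?_) (fun _ _ => Finset.mem_univ _) (fun σ _ => ?_)
  · rw [Subgroup.coe_mul, Equiv.Perm.coe_mul, ← rename_rename, hp, Equiv.Perm.sign_mul,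
      Equiv.Perm.sign_swap hcd, mul_neg_one, Units.neg_smul, add_neg_cancel]
  · exact hcd (Equiv.swap_eq_one_iff.mp (congrArg Subtype.val (mul_eq_left.mp h)))
  · exact Subtype.ext (Equiv.mul_swap_mul_self c d σ.1)

theorem sum_sign_smul_rename_eq_zero {S : Finset α} (hS : S.Nonempty) {p : MvPolynomial α R}
    (hp : ∀ c ∈ S, degreeOf c p + 1 < S.card) :
    ∑ σ : fixingSubgroup (Equiv.Perm α) ((S : Set α)ᶜ),
      Equiv.Perm.sign σ.1 • rename σ.1 p = 0 := by
  rw [p.as_sum]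
  simp only [map_sum, Finset.smul_sum]
  rw [Finset.sum_comm]
  refine Finset.sum_eq_zero fun m hm => ?_
  -- `m` takes fewer than `#S` values on `S`, hence repeats one of them.
  obtain ⟨c, hc, d, hd, hcd, hmcd⟩ : ∃ c ∈ S, ∃ d ∈ S, c ≠ d ∧ m c = m d := by
    refine Finset.exists_ne_map_eq_of_card_lt_of_maps_to (t := Finset.range (S.card - 1)) ?_ ?_
    · simpa using hS.card_pos
    · intro c hc
      have := monomial_le_degreeOf c hm
      have := hp c hc
      simp only [Finset.coe_range, Set.mem_Iio]
      omega
  refine sum_sign_smul_rename_eq_zero_of_rename_swap hcd ?_ (rename_swap_monomial hmcd _)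
  rw [mem_fixingSubgroup_iff]
  exact fun x hx => Equiv.swap_apply_of_ne_of_ne (by rintro rfl; exact hx hc)
    (by rintro rfl; exact hx hd)

end Antisymmetrization

theorem apply_one_mem_span_image_compl_of_sum_eq_zero (R : Type*) {G M : Type*} [Ring R]
    [Group G] [Fintype G] [AddCommGroup M] [IsAddTorsionFree M] [Module R M] {H : Subgroup G}
    {f : G → M}
    (hf : ∀ g, ∀ h ∈ H, f (g * h) = f g) (hsum : ∑ g, f g = 0) :
    f 1 ∈ Submodule.span R (f '' (H : Set G)ᶜ) := by
  obtain ⟨S, hS, hone⟩ := H.exists_isComplement_left 1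
  have hsumS : ∑ s : S, f s = 0 := by
    have hcard : Fintype.card H • ∑ s : S, f s = 0 := by
      rw [← hsum, ← (Equiv.ofBijective _ hS).sum_comp, Fintype.sum_prod_type, Finset.smul_sum]
      simp [hf]
    exact (smul_eq_zero_iff_right Fintype.card_ne_zero).mp hcard
  rw [Fintype.sum_eq_add_sum_compl ⟨1, hone⟩] at hsumS
  rw [eq_neg_of_add_eq_zero_left hsumS]
  refine neg_mem (sum_mem fun s hs => Submodule.subset_span ⟨s, fun hsH => ?_, rfl⟩)
  have : ((s, 1) : S × H) = (⟨1, hone⟩, ⟨s, hsH⟩) := hS.1 (by simp)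
  exact Finset.mem_compl.mp hs (Finset.mem_singleton.mpr (congrArg Prod.fst this))

/-! ### The column Vandermonde polynomial -/

/-- The pairs of cells of `lam` in a common column, the upper cell first. -/
def columnPairs (lam : YoungDiagram) : Finset (lam.cells × lam.cells) :=
  {p | p.1.1.2 = p.2.1.2 ∧ p.1.1.1 < p.2.1.1}

/-- The product of the Vandermonde determinants of the columns of `lam`, in variables indexed by
the cells themselves: the Specht polynomial of the tautological filling. The Specht polynomial of
a filling `T` is its image under `rename T`. -/
def columnVandermonde (R : Type*) [CommRing R] (lam : YoungDiagram) : MvPolynomial lam.cells R :=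
  ∏ p ∈ columnPairs lam, (X p.1 - X p.2)

/-- The permutations of the cells of `lam` that preserve every column. -/
def columnStabilizer (lam : YoungDiagram) : Subgroup (Equiv.Perm lam.cells) where
  carrier := {σ | ∀ c, (σ c).1.2 = c.1.2}
  one_mem' _ := rfl
  mul_mem' hσ hτ c := (hσ _).trans (hτ c)
  inv_mem' {σ} hσ c := by simpa using (hσ (σ⁻¹ c)).symm

section ColumnVandermonde

variable {R : Type*} [CommRing R] {lam : YoungDiagram}

theorem mem_columnPairs {p : lam.cells × lam.cells} :
    p ∈ columnPairs lam ↔ p.1.1.2 = p.2.1.2 ∧ p.1.1.1 < p.2.1.1 := by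
  simp [columnPairs]

theorem mem_columnStabilizer {σ : Equiv.Perm lam.cells} :
    σ ∈ columnStabilizer lam ↔ ∀ c, (σ c).1.2 = c.1.2 :=
  Iff.rfl

theorem rename_columnVandermonde {ι : Type*} (f : lam.cells → ι) :
    rename f (columnVandermonde R lam) = ∏ p ∈ columnPairs lam, (X (f p.1) - X (f p.2)) := by
  simp [columnVandermonde, map_prod]

theorem spechtPoly_eq_rename (n : ℕ) :
    spechtPoly n lam = fun T : lam.cells ≃ Fin n => rename T (columnVandermonde ℂ lam) := by
  funext T
  rw [rename_columnVandermonde, spechtPoly, columnPairs]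

theorem map_columnVandermonde {S : Type*} [CommRing S] (f : R →+* S) :
    map f (columnVandermonde R lam) = columnVandermonde S lam := by
  simp [columnVandermonde, map_prod]

theorem rename_columnVandermonde_of_mem_columnStabilizer {σ : Equiv.Perm lam.cells}
    (hσ : σ ∈ columnStabilizer lam) :
    rename σ (columnVandermonde R lam) = Equiv.Perm.sign σ • columnVandermonde R lam := by
  let key (c : lam.cells) : ℕ ×ₗ ℕ := toLex (c.1.2, c.1.1)
  have hkey : Function.Injective key := fun c d h =>
    Subtype.ext (Prod.swap_injective (toLex.injective h))
  -- Extended antisymmetrically by `±1` to pairs in different columns, the factors form a product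
  -- over all increasing pairs of a total order, as in the usual definition of the sign.
  let F (c d : lam.cells) : MvPolynomial lam.cells R :=
    if c.1.2 = d.1.2 then X c - X d else if c.1.2 < d.1.2 then 1 else -1
  have hF (c d) : F c d = -F d c := by
    rcases lt_trichotomy c.1.2 d.1.2 with h | h | h
    · simp [F, h, h.ne, h.ne', h.not_gt]
    · simp [F, h]
    · simp [F, h, h.ne, h.ne', h.not_gt]
  have rename_eq_prod {τ : Equiv.Perm lam.cells} (hτ : τ ∈ columnStabilizer lam) :
      rename τ (columnVandermonde R lam) =
        ∏ p : lam.cells × lam.cells with key p.1 < key p.2, F (τ p.1) (τ p.2) := by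
    rw [columnVandermonde, map_prod, columnPairs, Finset.prod_filter, Finset.prod_filter]
    refine Finset.prod_congr rfl fun p _ => ?_
    simp only [F, key, Prod.Lex.toLex_lt_toLex, mem_columnStabilizer.mp hτ, map_sub, rename_X]
    rcases lt_trichotomy p.1.1.2 p.2.1.2 with h | h | h
    · simp [h, h.ne]
    · simp [h]
    · simp [h.ne', h.not_gt]
  have rename_one_eq := rename_eq_prod (one_mem _)
  rw [Equiv.Perm.coe_one, rename_id_apply] at rename_one_eq
  rw [rename_eq_prod hσ, rename_one_eq]
  exact prod_key_lt_comp_perm hkey σ hF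

theorem card_above (q : lam.cells) :
    Finset.card {p : lam.cells | p.1.2 = q.1.2 ∧ p.1.1 < q.1.1} = q.1.1 := by
  rw [← Finset.card_range q.1.1]
  refine Finset.card_bij (fun p _ => p.1.1) ?_ ?_ ?_
  · simp +contextual
  · intro p hp p' hp' h
    simp only [Finset.mem_filter, Finset.mem_univ, true_and] at hp hp'
    exact Subtype.ext (Prod.ext h (hp.1.trans hp'.1.symm))
  · intro k hk
    rw [Finset.mem_range] at hk
    exact ⟨⟨(k, q.1.2), lam.up_left_mem hk.le le_rfl q.2⟩, by simp [hk], rfl⟩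

theorem card_left (q : lam.cells) :
    Finset.card {p : lam.cells | p.1.1 = q.1.1 ∧ p.1.2 < q.1.2} = q.1.2 := by
  rw [← Finset.card_range q.1.2]
  refine Finset.card_bij (fun p _ => p.1.2) ?_ ?_ ?_
  · simp +contextual
  · intro p hp p' hp' h
    simp only [Finset.mem_filter, Finset.mem_univ, true_and] at hp hp'
    exact Subtype.ext (Prod.ext (hp.1.trans hp'.1.symm) h)
  · intro k hk
    rw [Finset.mem_range] at hk
    exact ⟨⟨(q.1.1, k), lam.up_left_mem le_rfl hk.le q.2⟩, by simp [hk], rfl⟩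

theorem card_below_le (q : lam.cells) :
    Finset.card {p : lam.cells | q.1.2 = p.1.2 ∧ q.1.1 < p.1.1} ≤
      lam.colLen q.1.2 - q.1.1 - 1 := by
  rw [← Nat.card_Ioo]
  refine Finset.card_le_card_of_injOn (fun p => p.1.1) (fun p hp => ?_) fun p hp p' hp' h => ?_
  · simp only [Finset.coe_filter, Finset.mem_univ, true_and, Set.mem_ofPred_eq] at hp
    simpa [hp.1, hp.2] using YoungDiagram.mem_iff_lt_colLen.mp p.2
  · simp only [Finset.coe_filter, Finset.mem_univ, true_and, Set.mem_ofPred_eq] at hp hp'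
    exact Subtype.ext (Prod.ext h (hp.1.symm.trans hp'.1))

theorem sum_columnPairs_snd {M : Type*} [AddCommMonoid M] (g : lam.cells → M) :
    ∑ p ∈ columnPairs lam, g p.2 = ∑ c : lam.cells, c.1.1 • g c := by
  rw [columnPairs, Finset.sum_filter, Fintype.sum_prod_type_right]
  refine Finset.sum_congr rfl fun c _ => ?_
  dsimp only
  rw [← Finset.sum_filter, Finset.sum_const, card_above]

theorem degreeOf_columnVandermonde_lt (c : lam.cells) :
    degreeOf c (columnVandermonde R lam) < lam.colLen c.1.2 := by
  have degreeOf_factor_le (p : lam.cells × lam.cells) :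
      degreeOf c (X p.1 - X p.2 : MvPolynomial lam.cells R) ≤
        (if p.1 = c then 1 else 0) + if p.2 = c then 1 else 0 := by
    rcases subsingleton_or_nontrivial R with _ | _
    · simp [Subsingleton.elim (X p.1 - X p.2 : MvPolynomial lam.cells R) 0]
    · exact (degreeOf_sub_le _ _ _).trans (max_le (by simp [degreeOf_X, eq_comm])
        (by simp [degreeOf_X, eq_comm]))
  have sum_fst : ∑ p ∈ columnPairs lam, (if p.1 = c then 1 else 0) =
      Finset.card {p : lam.cells | c.1.2 = p.1.2 ∧ c.1.1 < p.1.1} := by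
    rw [columnPairs, Finset.sum_filter, Fintype.sum_prod_type_right, Finset.card_filter]
    refine Finset.sum_congr rfl fun d _ => ?_
    rw [Fintype.sum_eq_single c fun p hp => by simp [hp], if_pos rfl]
  have sum_snd : ∑ p ∈ columnPairs lam, (if p.2 = c then 1 else 0) = c.1.1 := by
    simp [sum_columnPairs_snd fun d => if d = c then 1 else 0]
  have row_lt_colLen : c.1.1 < lam.colLen c.1.2 := YoungDiagram.mem_iff_lt_colLen.mp c.2
  calc degreeOf c (columnVandermonde R lam)
    _ ≤ ∑ p ∈ columnPairs lam, ((if p.1 = c then 1 else 0) + if p.2 = c then 1 else 0) :=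
        (degreeOf_prod_le ..).trans (Finset.sum_le_sum fun p _ => degreeOf_factor_le p)
    _ ≤ (lam.colLen c.1.2 - c.1.1 - 1) + c.1.1 := by
        rw [Finset.sum_add_distrib, sum_fst, sum_snd]
        gcongr
        exact card_below_le c
    _ < lam.colLen c.1.2 := by omega

end ColumnVandermonde

/-! ### Linear independence -/

section LinearIndependence

variable {R : Type*} [CommRing R] {n : ℕ} {lam : YoungDiagram}

section LeadingMonomial

variable [Nontrivial R] {ι : Type*} [LinearOrder ι] [WellFoundedGT ι] {f : lam.cells → ι}

theorem lex_leadingCoeff_rename_factor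
    (hf : ∀ c d, c.1.2 = d.1.2 → c.1.1 < d.1.1 → f d < f c) {p : lam.cells × lam.cells}
    (hp : p ∈ columnPairs lam) :
    MonomialOrder.lex.leadingCoeff (X (f p.1) - X (f p.2) : MvPolynomial ι R) ∈
      nonZeroDivisors R := by
  have hp := mem_columnPairs.mp hp
  rw [lex_leadingCoeff_X_sub_X (hf _ _ hp.1 hp.2)]
  exact isUnit_one.neg.mem_nonZeroDivisors

theorem lex_degree_rename_columnVandermonde
    (hf : ∀ c d, c.1.2 = d.1.2 → c.1.1 < d.1.1 → f d < f c) :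
    MonomialOrder.lex.degree (rename f (columnVandermonde R lam)) =
      ∑ c : lam.cells, Finsupp.single (f c) c.1.1 := by
  rw [rename_columnVandermonde, MonomialOrder.degree_prod_of_mem_nonZeroDivisors
    fun p hp => lex_leadingCoeff_rename_factor hf hp]
  calc ∑ p ∈ columnPairs lam, MonomialOrder.lex.degree (X (f p.1) - X (f p.2) : MvPolynomial ι R)
    _ = ∑ p ∈ columnPairs lam, Finsupp.single (f p.2) 1 :=
        Finset.sum_congr rfl fun p hp => by
          have hp := mem_columnPairs.mp hp
          exact lex_degree_X_sub_X (hf _ _ hp.1 hp.2)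
    _ = ∑ c : lam.cells, Finsupp.single (f c) c.1.1 := by
        simp [sum_columnPairs_snd fun c => Finsupp.single (f c) 1]

theorem lex_leadingCoeff_rename_columnVandermonde
    (hf : ∀ c d, c.1.2 = d.1.2 → c.1.1 < d.1.1 → f d < f c) :
    MonomialOrder.lex.leadingCoeff (rename f (columnVandermonde R lam)) ∈ nonZeroDivisors R := by
  rw [rename_columnVandermonde, MonomialOrder.leadingCoeff_prod_of_mem_nonZeroDivisors
    fun p hp => lex_leadingCoeff_rename_factor hf hp]
  exact prod_mem fun p hp => lex_leadingCoeff_rename_factor hf hp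

end LeadingMonomial

theorem IsStandardFilling.col_eq_card {T : lam.cells ≃ Fin n} (hT : IsStandardFilling T)
    (v : Fin n) :
    (T.symm v).1.2 = Finset.card {w | (T.symm w).1.1 = (T.symm v).1.1 ∧ w < v} := by
  have left_iff {c d : lam.cells} (hrow : c.1.1 = d.1.1) : c.1.2 < d.1.2 ↔ T c < T d := by
    refine ⟨hT.1 c d hrow, fun hlt => ?_⟩
    by_contra! hle
    rcases hle.lt_or_eq with h | h
    · exact hlt.not_gt (hT.1 d c hrow.symm h)
    · exact hlt.ne (congrArg T (Subtype.ext (Prod.ext hrow h.symm)))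
  rw [← card_left (T.symm v)]
  refine Finset.card_equiv T fun c => ?_
  simp only [Finset.mem_filter, Finset.mem_univ, true_and, Equiv.symm_apply_apply]
  refine and_congr_right fun hrow => ?_
  rw [left_iff hrow, Equiv.apply_symm_apply]

theorem IsStandardFilling.eq_of_row_eq {T T' : lam.cells ≃ Fin n} (hT : IsStandardFilling T)
    (hT' : IsStandardFilling T') (hrow : ∀ v, (T.symm v).1.1 = (T'.symm v).1.1) : T = T' := by
  refine Equiv.symm_bijective.injective (Equiv.ext fun v => Subtype.ext (Prod.ext (hrow v) ?_))
  simp only [hT.col_eq_card, hT'.col_eq_card, hrow]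

theorem linearIndependent_rename_columnVandermonde :
    LinearIndependent R fun T : {T : lam.cells ≃ Fin n // IsStandardFilling T} =>
      rename T.1 (columnVandermonde R lam) := by
  rcases subsingleton_or_nontrivial R with _ | _
  · exact linearIndependent_of_subsingleton
  -- Reversing the order on `Fin n` makes the lower entry of a column the larger variable.
  refine .of_comp (rename OrderDual.toDual : _ →ₐ[R] MvPolynomial (Fin n)ᵒᵈ R).toLinearMap ?_
  have column_decreasing (T : {T : lam.cells ≃ Fin n // IsStandardFilling T}) (c d : lam.cells)
      (hcol : c.1.2 = d.1.2) (hrow : c.1.1 < d.1.1) :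
      OrderDual.toDual (T.1 d) < OrderDual.toDual (T.1 c) :=
    T.2.2 c d hcol hrow
  simp only [Function.comp_def, AlgHom.toLinearMap_apply, rename_rename]
  refine linearIndependent_of_injective_degree MonomialOrder.lex
    (fun T => lex_leadingCoeff_rename_columnVandermonde (column_decreasing T)) fun T T' h => ?_
  refine Subtype.ext (T.2.eq_of_row_eq T'.2 fun v => ?_)
  have degree_apply (T : {T : lam.cells ≃ Fin n // IsStandardFilling T}) :
      MonomialOrder.lex.degree (rename (fun c => OrderDual.toDual (T.1 c))
        (columnVandermonde R lam)) (OrderDual.toDual v) = (T.1.symm v).1.1 := by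
    rw [lex_degree_rename_columnVandermonde (column_decreasing T), Finsupp.finsetSum_apply,
      Fintype.sum_eq_single (T.1.symm v)]
    · simp
    · exact fun c hc => Finsupp.single_eq_of_ne fun h => hc (T.1.eq_symm_apply.mpr h.symm)
  rw [← degree_apply T, ← degree_apply T']
  exact DFunLike.congr_fun h _

end LinearIndependence

/-! ### Garnir relations -/

section Garnir

variable {R : Type*} [CommRing R] {lam : YoungDiagram}

theorem sign_smul_rename_columnVandermonde_mul {σ τ : Equiv.Perm lam.cells}
    (hτ : τ ∈ columnStabilizer lam) :
    Equiv.Perm.sign (σ * τ) • rename (σ * τ) (columnVandermonde R lam) =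
      Equiv.Perm.sign σ • rename σ (columnVandermonde R lam) := by
  rw [Equiv.Perm.coe_mul, ← rename_rename, rename_columnVandermonde_of_mem_columnStabilizer hτ,
    Equiv.Perm.sign_mul, Units.smul_def (Equiv.Perm.sign τ), map_zsmul, ← Units.smul_def, smul_smul,
    mul_assoc, Int.units_mul_self, mul_one]

theorem columnVandermonde_int_mem_span_of_colLen_lt_card {S : Finset lam.cells} (hS : S.Nonempty)
    (hcard : ∀ c ∈ S, lam.colLen c.1.2 < S.card) :
    columnVandermonde ℤ lam ∈ Submodule.span ℤ
      ((fun σ : Equiv.Perm lam.cells => rename σ (columnVandermonde ℤ lam)) ''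
        {σ | σ ∈ fixingSubgroup (Equiv.Perm lam.cells) ((S : Set lam.cells)ᶜ) ∧
          σ ∉ columnStabilizer lam}) := by
  let G := fixingSubgroup (Equiv.Perm lam.cells) ((S : Set lam.cells)ᶜ)
  have garnir_sum : ∑ σ : G, Equiv.Perm.sign σ.1 • rename σ.1 (columnVandermonde ℤ lam) = 0 :=
    sum_sign_smul_rename_eq_zero hS fun c hc =>
      (Nat.succ_le_of_lt (degreeOf_columnVandermonde_lt c)).trans_lt (hcard c hc)
  have mem_span := apply_one_mem_span_image_compl_of_sum_eq_zero ℤ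
    (H := (columnStabilizer lam).subgroupOf G)
    (fun σ τ hτ => sign_smul_rename_columnVandermonde_mul (σ := σ) hτ) garnir_sum
  rw [OneMemClass.coe_one, Equiv.Perm.sign_one, one_smul, Equiv.Perm.coe_one,
    rename_id_apply] at mem_span
  refine Submodule.span_le.mpr ?_ mem_span
  rintro _ ⟨σ, hσ, rfl⟩
  exact Submodule.smul_mem _ _ (Submodule.subset_span ⟨σ, ⟨σ.2, hσ⟩, rfl⟩)

theorem columnVandermonde_mem_span_of_colLen_lt_card {S : Finset lam.cells} (hS : S.Nonempty)
    (hcard : ∀ c ∈ S, lam.colLen c.1.2 < S.card) :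
    columnVandermonde R lam ∈ Submodule.span R
      ((fun σ : Equiv.Perm lam.cells => rename σ (columnVandermonde R lam)) ''
        {σ | σ ∈ fixingSubgroup (Equiv.Perm lam.cells) ((S : Set lam.cells)ᶜ) ∧
          σ ∉ columnStabilizer lam}) := by
  -- Solving the Garnir relation for its identity coset cancels the order of a group, which is
  -- possible over `ℤ` but not over every `R`.
  have mem_span := Submodule.apply_mem_span_image_of_mem_span
    (map (Int.castRingHom R)).toAddMonoidHom.toIntLinearMap
    (columnVandermonde_int_mem_span_of_colLen_lt_card hS hcard)
  simpa [Set.image_image, map_rename, map_columnVandermonde] using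
    Submodule.span_subset_span ℤ R _ mem_span

/-- The cells of the Garnir relation for two cells `c` and `d` of one row, `c` to the left of `d`:
those weakly below `c` in its column and those weakly above `d` in its column. -/
def garnirCells (c d : lam.cells) : Finset lam.cells :=
  {x | x.1.2 = c.1.2 ∧ c.1.1 ≤ x.1.1 ∨ x.1.2 = d.1.2 ∧ x.1.1 ≤ d.1.1}

theorem mem_garnirCells {c d x : lam.cells} : x ∈ garnirCells c d ↔
    x.1.2 = c.1.2 ∧ c.1.1 ≤ x.1.1 ∨ x.1.2 = d.1.2 ∧ x.1.1 ≤ d.1.1 := by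
  simp [garnirCells]

theorem colLen_lt_card_garnirCells {c d : lam.cells} (hrow : c.1.1 = d.1.1)
    (hcol : c.1.2 < d.1.2) : lam.colLen c.1.2 < (garnirCells c d).card := by
  rw [Nat.lt_iff_add_one_le, ← Finset.card_range (lam.colLen c.1.2 + 1)]
  refine Finset.card_le_card_of_surjOn
    (fun x => if x.1.2 = c.1.2 then x.1.1 + 1 else x.1.1) fun k hk => ?_
  rw [Finset.coe_range, Set.mem_Iio] at hk
  rcases le_or_gt k d.1.1 with hkd | hkd
  · exact ⟨⟨(k, d.1.2), lam.up_left_mem hkd le_rfl d.2⟩,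
      mem_garnirCells.mpr (.inr ⟨rfl, hkd⟩), if_neg hcol.ne'⟩
  · obtain ⟨r, rfl⟩ := Nat.exists_eq_add_one_of_ne_zero hkd.ne_bot
    exact ⟨⟨(r, c.1.2), YoungDiagram.mem_iff_lt_colLen.mpr (by omega)⟩,
      mem_garnirCells.mpr (.inl ⟨rfl, by simp only; omega⟩), if_pos rfl⟩

theorem columnVandermonde_mem_span_garnir {c d : lam.cells} (hrow : c.1.1 = d.1.1)
    (hcol : c.1.2 < d.1.2) :
    columnVandermonde R lam ∈ Submodule.span R
      ((fun σ : Equiv.Perm lam.cells => rename σ (columnVandermonde R lam)) ''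
        {σ | σ ∈ fixingSubgroup (Equiv.Perm lam.cells) ((garnirCells c d : Set lam.cells)ᶜ) ∧
          σ ∉ columnStabilizer lam}) := by
  have hcard := colLen_lt_card_garnirCells hrow hcol
  refine columnVandermonde_mem_span_of_colLen_lt_card (Finset.card_pos.mp (by omega))
    fun x hx => (lam.colLen_anti _ _ ?_).trans_lt hcard
  rcases mem_garnirCells.mp hx with ⟨h, -⟩ | ⟨h, -⟩
  · exact h.ge
  · exact hcol.le.trans h.ge

end Garnir

/-! ### Straightening -/

theorem exists_lt_apply_perm_of_ne {α M : Type*} [Finite α] [AddCommMonoid M] [LinearOrder M]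
    [IsOrderedCancelAddMonoid M] {g : α → M} {σ : Equiv.Perm α} {x : α} (hx : g (σ x) ≠ g x) :
    ∃ y, g y < g (σ y) := by
  have := Fintype.ofFinite α
  by_contra! hle
  have hlt := Finset.sum_lt_sum (s := Finset.univ) (fun y _ => hle y)
    ⟨x, Finset.mem_univ x, (hle x).lt_of_ne hx⟩
  exact hlt.ne (Equiv.sum_comp σ g)

theorem mem_of_mem_fixingSubgroup_compl_of_apply_ne {α : Type*} {S : Set α} {σ : Equiv.Perm α}
    (hσ : σ ∈ fixingSubgroup (Equiv.Perm α) Sᶜ) {x : α} (hx : σ x ≠ x) : x ∈ S := by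
  by_contra hxS
  exact hx ((mem_fixingSubgroup_iff _).mp hσ x hxS)

theorem apply_mem_of_mem_fixingSubgroup_compl_of_apply_ne {α : Type*} {S : Set α}
    {σ : Equiv.Perm α} (hσ : σ ∈ fixingSubgroup (Equiv.Perm α) Sᶜ) {x : α} (hx : σ x ≠ x) :
    σ x ∈ S :=
  mem_of_mem_fixingSubgroup_compl_of_apply_ne hσ (σ.injective.ne hx)

theorem sum_mul_lt_sum_comp_perm_mul_of_antivaryOn {α M : Type*} [Fintype α] [Semiring M]
    [LinearOrder M] [IsStrictOrderedRing M] [ExistsAddOfLE M] {f g : α → M}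
    {S : Finset α} {σ : Equiv.Perm α}
    (hσ : σ ∈ fixingSubgroup (Equiv.Perm α) ((S : Set α)ᶜ)) (hfg : AntivaryOn f g S) {x y : α}
    (hx : x ∈ S) (hy : y ∈ S) (hg : g x < g y) (hf : f (σ x) < f (σ y)) :
    ∑ c, f c * g c < ∑ c, f (σ c) * g c := by
  have sum_compl_eq : ∑ c ∈ Sᶜ, f (σ c) * g c = ∑ c ∈ Sᶜ, f c * g c :=
    Finset.sum_congr rfl fun c hc => by
      rw [show σ c = c from (mem_fixingSubgroup_iff _).mp hσ c (by simpa using hc)]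
  rw [← Finset.sum_add_sum_compl S, ← Finset.sum_add_sum_compl S fun c => f (σ c) * g c,
    sum_compl_eq, add_lt_add_iff_right, hfg.sum_mul_lt_sum_comp_perm_mul_iff
      fun _ => mem_of_mem_fixingSubgroup_compl_of_apply_ne hσ]
  exact fun h => hf.not_ge (h hx hy hg)

/-- A quantity, compared lexicographically, that increases along every straightening step: the
sum of entry times column index, then the sum of entry times row index. -/
def fillingStatistic {n : ℕ} {lam : YoungDiagram} (T : lam.cells ≃ Fin n) : ℕ ×ₗ ℕ :=
  toLex (∑ c, (T c : ℕ) * c.1.2, ∑ c, (T c : ℕ) * c.1.1)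

section Straightening

variable {R : Type*} [CommRing R] {n : ℕ} {lam : YoungDiagram} {T : lam.cells ≃ Fin n}
  {c d : lam.cells}

theorem swap_mem_columnStabilizer (hcol : c.1.2 = d.1.2) :
    Equiv.swap c d ∈ columnStabilizer lam := fun x => by
  rw [Equiv.swap_apply_def]
  split_ifs <;> simp_all

theorem fillingStatistic_lt_swap (hcol : c.1.2 = d.1.2) (hrow : c.1.1 < d.1.1)
    (hT : T d < T c) : fillingStatistic T < fillingStatistic ((Equiv.swap c d).trans T) := by
  refine Prod.Lex.toLex_lt_toLex.mpr (.inr ⟨?_, ?_⟩)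
  · rw [← Equiv.sum_comp (Equiv.swap c d)]
    simp only [mem_columnStabilizer.mp (swap_mem_columnStabilizer hcol), Equiv.trans_apply]
  · refine sum_mul_lt_sum_comp_perm_mul_of_antivaryOn (S := {c, d}) (x := c) (y := d)
      (f := fun x => (T x : ℕ)) ?_ ?_ (by simp) (by simp) hrow (by simpa using hT)
    · rw [mem_fixingSubgroup_iff]
      intro x hx
      simp only [Finset.coe_insert, Finset.coe_singleton, Set.mem_compl_iff, Set.mem_insert_iff,
        Set.mem_singleton_iff, not_or] at hx
      exact Equiv.swap_apply_of_ne_of_ne hx.1 hx.2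
    · simp only [Finset.coe_insert, Finset.coe_singleton]
      rintro x (rfl | rfl) y (rfl | rfl) h
      · exact le_rfl
      · exact hT.le
      · exact absurd h hrow.not_gt
      · exact le_rfl

theorem apply_lt_apply_of_mem_garnirCells
    (hmono : ∀ c d : lam.cells, c.1.2 = d.1.2 → c.1.1 < d.1.1 → T c < T d)
    (hcol : c.1.2 < d.1.2) (hT : T d < T c) {x y : lam.cells} (hx : x ∈ garnirCells c d)
    (hy : y ∈ garnirCells c d) (hxy : x.1.2 < y.1.2) : T y < T x := by
  have monotone {a b : lam.cells} (hcol : a.1.2 = b.1.2) (hrow : a.1.1 ≤ b.1.1) : T a ≤ T b := by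
    rcases hrow.lt_or_eq with h | h
    · exact (hmono a b hcol h).le
    · exact (congrArg T (Subtype.ext (Prod.ext h hcol))).le
  rw [mem_garnirCells] at hx hy
  obtain ⟨hxc, hcx⟩ : x.1.2 = c.1.2 ∧ c.1.1 ≤ x.1.1 := by omega
  obtain ⟨hyd, hyd'⟩ : y.1.2 = d.1.2 ∧ y.1.1 ≤ d.1.1 := by omega
  exact (monotone hyd hyd').trans_lt (hT.trans_le (monotone hxc.symm hcx))

theorem fillingStatistic_lt_of_mem_garnir
    (hmono : ∀ c d : lam.cells, c.1.2 = d.1.2 → c.1.1 < d.1.1 → T c < T d)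
    (hcol : c.1.2 < d.1.2) (hT : T d < T c) {σ : Equiv.Perm lam.cells}
    (hσ : σ ∈ fixingSubgroup (Equiv.Perm lam.cells) ((garnirCells c d : Set lam.cells)ᶜ))
    (hσcol : σ ∉ columnStabilizer lam) :
    fillingStatistic T < fillingStatistic (σ.trans T) := by
  have mem_of_col_ne {x : lam.cells} (hx : (σ x).1.2 ≠ x.1.2) :
      x ∈ garnirCells c d ∧ σ x ∈ garnirCells c d :=
    have hσx : σ x ≠ x := fun h => hx (by rw [h])
    ⟨mem_of_mem_fixingSubgroup_compl_of_apply_ne hσ hσx,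
      apply_mem_of_mem_fixingSubgroup_compl_of_apply_ne hσ hσx⟩
  obtain ⟨z, hz⟩ : ∃ z, (σ z).1.2 ≠ z.1.2 := by simpa [mem_columnStabilizer] using hσcol
  obtain ⟨x, hx⟩ : ∃ x, x.1.2 < (σ x).1.2 :=
    exists_lt_apply_perm_of_ne (g := fun x : lam.cells => x.1.2) hz
  obtain ⟨y, hy⟩ : ∃ y, (σ y).1.2 < y.1.2 :=
    exists_lt_apply_perm_of_ne (M := ℕᵒᵈ) (g := fun x : lam.cells => x.1.2) hz
  obtain ⟨hxS, hσxS⟩ := mem_of_col_ne hx.ne'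
  obtain ⟨hyS, hσyS⟩ := mem_of_col_ne hy.ne
  obtain ⟨hxy, hσyx⟩ : x.1.2 < y.1.2 ∧ (σ y).1.2 < (σ x).1.2 := by
    simp only [mem_garnirCells] at hxS hσxS hyS hσyS
    omega
  exact Prod.Lex.toLex_lt_toLex.mpr (.inl (sum_mul_lt_sum_comp_perm_mul_of_antivaryOn
    (f := fun x => (T x : ℕ)) (g := fun x => x.1.2) hσ
    (fun _ ha _ hb hab => (apply_lt_apply_of_mem_garnirCells hmono hcol hT ha hb hab).le)
    hxS hyS hxy (apply_lt_apply_of_mem_garnirCells hmono hcol hT hσyS hσxS hσyx)))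

theorem rename_columnVandermonde_mem_span_of_column_descent (hcol : c.1.2 = d.1.2)
    (hrow : c.1.1 < d.1.1) (hT : T d < T c) :
    rename T (columnVandermonde R lam) ∈ Submodule.span R
      ((fun T' : lam.cells ≃ Fin n => rename T' (columnVandermonde R lam)) ''
        {T' | fillingStatistic T < fillingStatistic T'}) := by
  have hcd : c ≠ d := fun h => hT.ne' (congrArg T h)
  have rename_swap : rename ((Equiv.swap c d).trans T) (columnVandermonde R lam) =
      -rename T (columnVandermonde R lam) := by
    rw [Equiv.coe_trans, ← rename_rename, rename_columnVandermonde_of_mem_columnStabilizer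
      (swap_mem_columnStabilizer hcol), Equiv.Perm.sign_swap hcd, Units.neg_smul, one_smul, map_neg]
  rw [← neg_neg (rename T _), ← rename_swap]
  exact neg_mem (Submodule.subset_span ⟨_, fillingStatistic_lt_swap hcol hrow hT, rfl⟩)

theorem rename_columnVandermonde_mem_span_of_row_descent
    (hmono : ∀ c d : lam.cells, c.1.2 = d.1.2 → c.1.1 < d.1.1 → T c < T d)
    (hrow : c.1.1 = d.1.1) (hcol : c.1.2 < d.1.2) (hT : T d < T c) :
    rename T (columnVandermonde R lam) ∈ Submodule.span R
      ((fun T' : lam.cells ≃ Fin n => rename T' (columnVandermonde R lam)) ''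
        {T' | fillingStatistic T < fillingStatistic T'}) := by
  have mem_span := Submodule.apply_mem_span_image_of_mem_span (rename (R := R) T).toLinearMap
    (columnVandermonde_mem_span_garnir hrow hcol)
  refine Submodule.span_mono ?_ mem_span
  rintro _ ⟨_, ⟨σ, ⟨hσ, hσcol⟩, rfl⟩, rfl⟩
  refine ⟨σ.trans T, fillingStatistic_lt_of_mem_garnir hmono hcol hT hσ hσcol, ?_⟩
  simp only [Equiv.coe_trans, ← rename_rename, AlgHom.toLinearMap_apply]

theorem rename_columnVandermonde_mem_span_of_not_isStandardFilling (hT : ¬ IsStandardFilling T) :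
    rename T (columnVandermonde R lam) ∈ Submodule.span R
      ((fun T' : lam.cells ≃ Fin n => rename T' (columnVandermonde R lam)) ''
        {T' | fillingStatistic T < fillingStatistic T'}) := by
  have descent_of_not_lt {c d : lam.cells} (hcd : c.1 ≠ d.1) (h : ¬T c < T d) : T d < T c :=
    (not_lt.mp h).lt_of_ne fun h => hcd (congrArg Subtype.val (T.injective h)).symm
  by_cases hmono : ∀ c d : lam.cells, c.1.2 = d.1.2 → c.1.1 < d.1.1 → T c < T d
  · have not_row_mono : ¬∀ c d : lam.cells, c.1.1 = d.1.1 → c.1.2 < d.1.2 → T c < T d :=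
      fun h => hT ⟨h, hmono⟩
    push Not at not_row_mono
    obtain ⟨c, d, hrow, hcol, h⟩ := not_row_mono
    exact rename_columnVandermonde_mem_span_of_row_descent hmono hrow hcol
      (descent_of_not_lt (fun h => hcol.ne (congrArg Prod.snd h)) h.not_gt)
  · push Not at hmono
    obtain ⟨c, d, hcol, hrow, h⟩ := hmono
    exact rename_columnVandermonde_mem_span_of_column_descent hcol hrow
      (descent_of_not_lt (fun h => hrow.ne (congrArg Prod.fst h)) h.not_gt)

theorem rename_columnVandermonde_mem_span_isStandardFilling (T : lam.cells ≃ Fin n) :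
    rename T (columnVandermonde R lam) ∈ Submodule.span R
      (Set.range fun T : {T : lam.cells ≃ Fin n // IsStandardFilling T} =>
        rename T.1 (columnVandermonde R lam)) := by
  set W := Submodule.span R (Set.range fun T : {T : lam.cells ≃ Fin n // IsStandardFilling T} =>
    rename T.1 (columnVandermonde R lam))
  by_contra hTW
  obtain ⟨T, hTW, hmax⟩ := (Set.toFinite {T : lam.cells ≃ Fin n |
    rename T (columnVandermonde R lam) ∉ W}).exists_maximalFor fillingStatistic _ ⟨T, hTW⟩
  have mem_of_lt {T'} (h : fillingStatistic T < fillingStatistic T') :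
      rename T' (columnVandermonde R lam) ∈ W := by
    by_contra hT'
    exact h.not_ge (hmax hT' h.le)
  refine hTW (Submodule.span_le.mpr ?_ (rename_columnVandermonde_mem_span_of_not_isStandardFilling
    fun hT => hTW (Submodule.subset_span ⟨⟨T, hT⟩, rfl⟩)))
  rintro _ ⟨T', hT', rfl⟩
  exact mem_of_lt hT'

end Straightening

theorem spechtPoly_standard_basis_general (R : Type*) [CommRing R] (n : ℕ) (lam : YoungDiagram) :
    LinearIndependent R
        (fun T : {T : lam.cells ≃ Fin n // IsStandardFilling T} =>
          rename T.1 (columnVandermonde R lam)) ∧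
      Submodule.span R
          (Set.range (fun T : {T : lam.cells ≃ Fin n // IsStandardFilling T} =>
            rename T.1 (columnVandermonde R lam))) =
        Submodule.span R
          (Set.range fun T : lam.cells ≃ Fin n => rename T (columnVandermonde R lam)) := by
  refine ⟨linearIndependent_rename_columnVandermonde, le_antisymm (Submodule.span_mono ?_)
    (Submodule.span_le.mpr ?_)⟩
  · exact Set.range_subset_iff.mpr fun T => ⟨T.1, rfl⟩
  · exact Set.range_subset_iff.mpr rename_columnVandermonde_mem_span_isStandardFilling

/-- The Specht polynomials of the standard Young tableaux of shape `λ` form a basis of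
the Specht module `SP_λ`: they are linearly independent and span the same space as the
Specht polynomials of all bijective fillings. -/
theorem spechtPoly_standard_basis (n : ℕ) (lam : YoungDiagram) (hlam : lam.card = n) :
    LinearIndependent ℂ
        (fun T : {T : lam.cells ≃ Fin n // IsStandardFilling T} => spechtPoly n lam T.1) ∧
      Submodule.span ℂ
        (Set.range fun T : {T : lam.cells ≃ Fin n // IsStandardFilling T} =>
          spechtPoly n lam T.1) = spechtModule n lam := by
  simpa only [spechtModule, spechtPoly_eq_rename] using spechtPoly_standard_basis_general ℂ n lam

end
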